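/- The classification error function E attains its minimum over nonzero vectors: there exists a nonzero α₀ ∈ ℝ^p such that E(α₀) ≤ E(α) for every nonzero α ∈ ℝ^p. -/

import Mathlib

open MeasureTheory ProbabilityTheory Matrix Filter Set

noncomputable def Phi (t : ℝ) : ℝ := ((gaussianReal 0 1) (Set.Iic t)).toReal
noncomputable def calE (r g : ℝ) : ℝ :=
  if g = 1 then Phi (-(|r| / 2))
  else
    1/2
      + (1/2) * Phi ((r - g * Real.sqrt (r^2 + (g^2 - 1) * Real.log (g^2))) / (g^2 - 1))
      - (1/2) * Phi ((r + g * Real.sqrt (r^2 + (g^2 - 1) * Real.log (g^2))) / (g^2 - 1))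
      + (1/2) * Phi ((r * g + Real.sqrt (r^2 + (g^2 - 1) * Real.log (g^2))) / (g^2 - 1))
      - (1/2) * Phi ((r * g - Real.sqrt (r^2 + (g^2 - 1) * Real.log (g^2))) / (g^2 - 1))
noncomputable def Evec {p : ℕ} (μ0 μ1 : Fin p → ℝ) (S0 S1 : Matrix (Fin p) (Fin p) ℝ)
    (α : Fin p → ℝ) : ℝ :=
  calE ((dotProduct α μ0 - dotProduct α μ1) / Real.sqrt (dotProduct α (S1.mulVec α)))
    (Real.sqrt (dotProduct α (S0.mulVec α)) / Real.sqrt (dotProduct α (S1.mulVec α)))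

/-!
After standardizing the second class, the two class distributions are `N(0, 1)` and `N(r, g²)`. Each
root of the quadratic at which their densities agree contributes the difference of the two tail
probabilities beyond it, and reflecting `r` to `-r` exchanges the two roots, so `calE r g` is
`(1 - T(r, g) - T(-r, g)) / 2` for a single function `T`. The only delicate point is `g = 1`, where
the quadratic degenerates: for `r < 0` rationalizing the root formula removes the singularity, while
for `r ≥ 0` the Lipschitz bound on the normal distribution function squeezes `T` to `0`. Hence
`calE` is continuous for `g > 0`, and as the error function is invariant under positive rescaling,
compactness of the unit sphere yields the minimum.
-/

open scoped NNReal Topology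

section DistributionFunction

lemma lipschitzWith_measureReal_Iic {μ : Measure ℝ} [IsFiniteMeasure μ] {K : ℝ≥0}
    (hμ : μ ≤ K • volume) : LipschitzWith K fun t => μ.real (Iic t) := by
  refine LipschitzWith.of_le_add_mul K fun x y => ?_
  have measure_Ioc_le : μ.real (Ioc y x) ≤ K * dist x y := calc
    μ.real (Ioc y x) ≤ (K • volume : Measure ℝ).real (Ioc y x) :=
      ENNReal.toReal_mono measure_Ioc_lt_top.ne (hμ _)
    _ = K * max (x - y) 0 := by simp
    _ ≤ K * dist x y := by
      rw [Real.dist_eq]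
      gcongr
      exact max_le (le_abs_self _) (abs_nonneg _)
  calc μ.real (Iic x) ≤ μ.real (Iic y ∪ Ioc y x) :=
        measureReal_mono Iic_subset_Iic_union_Ioc
    _ ≤ μ.real (Iic y) + μ.real (Ioc y x) := measureReal_union_le _ _
    _ ≤ μ.real (Iic y) + K * dist x y := by gcongr

lemma measureReal_Iic_neg (μ : Measure ℝ) [IsProbabilityMeasure μ] [NullSingletonClass μ]
    [μ.IsNegInvariant] (t : ℝ) : μ.real (Iic (-t)) = 1 - μ.real (Iic t) := calc
  μ.real (Iic (-t)) = μ.real (Ici t) := by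
    rw [← Set.neg_Ici, measureReal_def, Measure.measure_neg, measureReal_def]
  _ = μ.real (Iic t)ᶜ := by rw [compl_Iic, measureReal_congr Ioi_ae_eq_Ici]
  _ = 1 - μ.real (Iic t) := probReal_compl_eq_one_sub measurableSet_Iic

lemma gaussianPDFReal_le (m : ℝ) (v : ℝ≥0) (x : ℝ) :
    gaussianPDFReal m v x ≤ (√(2 * Real.pi * v))⁻¹ := by
  rw [gaussianPDFReal_def]
  refine mul_le_of_le_one_right (by positivity) (Real.exp_le_one_iff.mpr ?_)
  exact div_nonpos_of_nonpos_of_nonneg (neg_nonpos.mpr (sq_nonneg _)) (by positivity)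

lemma gaussianPDF_zero_one_le_one (x : ℝ) : gaussianPDF 0 1 x ≤ 1 := by
  have one_le_normalization : 1 ≤ √(2 * Real.pi * (1 : ℝ≥0)) := by
    rw [Real.one_le_sqrt, NNReal.coe_one]
    linarith [Real.pi_gt_three]
  rw [gaussianPDF, ENNReal.ofReal_le_one]
  exact (gaussianPDFReal_le 0 1 x).trans (inv_le_one_of_one_le₀ one_le_normalization)

lemma gaussianReal_zero_one_le_volume : gaussianReal 0 1 ≤ volume := calc
  gaussianReal 0 1 = volume.withDensity (gaussianPDF 0 1) :=
    gaussianReal_of_var_ne_zero 0 one_ne_zero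
  _ ≤ volume.withDensity 1 := withDensity_mono (ae_of_all _ gaussianPDF_zero_one_le_one)
  _ = volume := withDensity_one

lemma isNegInvariant_gaussianReal_zero (v : ℝ≥0) : (gaussianReal 0 v).IsNegInvariant :=
  ⟨gaussianReal_map_neg.trans (by rw [neg_zero])⟩

lemma lipschitzWith_Phi : LipschitzWith 1 Phi :=
  lipschitzWith_measureReal_Iic (by simpa using gaussianReal_zero_one_le_volume)

lemma abs_Phi_sub_Phi_le (a b : ℝ) : |Phi a - Phi b| ≤ |a - b| := by
  simpa [Real.dist_eq] using lipschitzWith_Phi.dist_le_mul a b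

@[fun_prop]
lemma continuous_Phi : Continuous Phi :=
  lipschitzWith_Phi.continuous

lemma Phi_neg (t : ℝ) : Phi (-t) = 1 - Phi t :=
  have := nullSingletonClass_gaussianReal (μ := 0) one_ne_zero
  have := isNegInvariant_gaussianReal_zero 1
  measureReal_Iic_neg (gaussianReal 0 1) t

lemma Phi_zero : Phi 0 = 1 / 2 := by
  have := Phi_neg 0
  rw [neg_zero] at this
  linarith

end DistributionFunction

section TailGap

/-- The quantity `√Δ(r, g)`. The densities of `N(0, 1)` and `N(r, g²)` agree at the roots of the
quadratic `(g² - 1) t² + 2 r t - (r² + g² log g²)`, whose discriminant is `4 g² Δ(r, g)`. -/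
noncomputable def sqrtDiscr (r g : ℝ) : ℝ :=
  √(r ^ 2 + (g ^ 2 - 1) * Real.log (g ^ 2))

/-- The tail gap `P(X₁ > t) - P(X₀ > t)` for `X₁ ∼ N(0, 1)`, `X₀ ∼ N(r, g²)` and the root
`t = -(r + g√Δ) / (g² - 1)` of the equation saying that their densities agree at `t`. At `g = 1`,
where that formula for `t` breaks down, it is given its limiting value. -/
noncomputable def tailGap (r g : ℝ) : ℝ :=
  if g = 1 then 1 - 2 * Phi (min r 0 / 2)
  else Phi ((r + g * sqrtDiscr r g) / (g ^ 2 - 1)) - Phi ((r * g + sqrtDiscr r g) / (g ^ 2 - 1))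

lemma sqrtDiscr_nonneg (r g : ℝ) : 0 ≤ sqrtDiscr r g :=
  Real.sqrt_nonneg _

lemma sqrtDiscr_neg (r g : ℝ) : sqrtDiscr (-r) g = sqrtDiscr r g := by
  rw [sqrtDiscr, sqrtDiscr, neg_sq]

lemma sqrtDiscr_one (r : ℝ) : sqrtDiscr r 1 = |r| := by
  simp [sqrtDiscr, Real.sqrt_sq_eq_abs]

lemma sub_one_mul_log_nonneg {x : ℝ} (hx : 0 ≤ x) : 0 ≤ (x - 1) * Real.log x := by
  rcases le_total 1 x with h | h
  · exact mul_nonneg (sub_nonneg.mpr h) (Real.log_nonneg h)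
  · exact mul_nonneg_of_nonpos_of_nonpos (sub_nonpos.mpr h) (Real.log_nonpos hx h)

lemma sq_sqrtDiscr (r g : ℝ) :
    sqrtDiscr r g ^ 2 = r ^ 2 + (g ^ 2 - 1) * Real.log (g ^ 2) :=
  Real.sq_sqrt (add_nonneg (sq_nonneg r) (sub_one_mul_log_nonneg (sq_nonneg g)))

lemma continuousAt_sqrtDiscr {x : ℝ × ℝ} (hx : x.2 ≠ 0) :
    ContinuousAt (fun x : ℝ × ℝ => sqrtDiscr x.1 x.2) x := by
  have := pow_ne_zero 2 hx
  unfold sqrtDiscr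
  fun_prop (disch := assumption)

lemma sq_sub_one_ne_zero {g : ℝ} (hg : 0 < g) (hg1 : g ≠ 1) : g ^ 2 - 1 ≠ 0 :=
  sub_ne_zero.mpr fun h => hg1 ((pow_eq_one_iff_of_nonneg hg.le two_ne_zero).mp h)

lemma tailGap_one (r : ℝ) : tailGap r 1 = 1 - 2 * Phi (min r 0 / 2) :=
  if_pos rfl

lemma tailGap_of_ne_one (r : ℝ) {g : ℝ} (hg1 : g ≠ 1) :
    tailGap r g =
      Phi ((r + g * sqrtDiscr r g) / (g ^ 2 - 1)) - Phi ((r * g + sqrtDiscr r g) / (g ^ 2 - 1)) :=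
  if_neg hg1

lemma calE_eq_tailGap (r g : ℝ) : calE r g = (1 - tailGap r g - tailGap (-r) g) / 2 := by
  rcases eq_or_ne g 1 with rfl | hg1
  · rw [calE, if_pos rfl, tailGap_one, tailGap_one]
    rcases le_total 0 r with hr | hr
    · rw [abs_of_nonneg hr, min_eq_right hr, min_eq_left (neg_nonpos.mpr hr), zero_div, Phi_zero,
        neg_div]
      ring
    · rw [abs_of_nonpos hr, min_eq_left hr, min_eq_right (neg_nonneg.mpr hr), zero_div, Phi_zero,
        neg_div, neg_neg]
      ring
  · have neg_root : (-r + g * sqrtDiscr r g) / (g ^ 2 - 1)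
        = -((r - g * sqrtDiscr r g) / (g ^ 2 - 1)) := by ring
    have neg_scaled_root : (-r * g + sqrtDiscr r g) / (g ^ 2 - 1)
        = -((r * g - sqrtDiscr r g) / (g ^ 2 - 1)) := by ring
    rw [calE, if_neg hg1, tailGap_of_ne_one _ hg1, tailGap_of_ne_one _ hg1, sqrtDiscr_neg,
      neg_root, neg_scaled_root, Phi_neg, Phi_neg, sqrtDiscr]
    ring

lemma abs_tailGap_le (r : ℝ) {g : ℝ} (hg : 0 < g) :
    |tailGap r g| ≤ |sqrtDiscr r g - r| / (g + 1) := by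
  rcases eq_or_ne g 1 with rfl | hg1
  · calc |tailGap r 1| = 2 * |Phi 0 - Phi (min r 0 / 2)| := by
          rw [tailGap_one, Phi_zero, ← abs_two, ← abs_mul, abs_two]
          ring_nf
      _ ≤ 2 * |0 - min r 0 / 2| :=
          mul_le_mul_of_nonneg_left (abs_Phi_sub_Phi_le _ _) zero_le_two
      _ = |sqrtDiscr r 1 - r| / (1 + 1) := by
          rw [sqrtDiscr_one]
          rcases le_total 0 r with hr | hr
          · simp [hr, abs_of_nonneg]
          · rw [min_eq_left hr, abs_of_nonpos hr, abs_of_nonneg (by linarith),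
              abs_of_nonneg (by linarith)]
            ring
  · have hden := sq_sub_one_ne_zero hg hg1
    have hden' : g + 1 ≠ 0 := by positivity
    have sub_eq : (r + g * sqrtDiscr r g) / (g ^ 2 - 1) - (r * g + sqrtDiscr r g) / (g ^ 2 - 1)
        = (sqrtDiscr r g - r) / (g + 1) := by
      field_simp
      ring
    rw [tailGap_of_ne_one r hg1]
    refine (abs_Phi_sub_Phi_le _ _).trans_eq ?_
    rw [sub_eq, abs_div, abs_of_pos (show 0 < g + 1 by positivity)]

lemma tailGap_of_neg {r g : ℝ} (hr : r < 0) (hg : 0 < g) :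
    tailGap r g = Phi ((r ^ 2 + g ^ 2 * Real.log (g ^ 2)) / (g * sqrtDiscr r g - r))
      - Phi ((Real.log (g ^ 2) - r ^ 2) / (sqrtDiscr r g - r * g)) := by
  rcases eq_or_ne g 1 with rfl | hg1
  · have first_arg : r ^ 2 / (1 * -r - r) = -(r / 2) := by
      field_simp [hr.ne]
      ring
    have second_arg : -r ^ 2 / (-r - r * 1) = r / 2 := by
      field_simp [hr.ne]
      ring
    simp only [tailGap_one, min_eq_left hr.le, sqrtDiscr_one, abs_of_neg hr, one_pow, Real.log_one,
      mul_zero, add_zero, zero_sub, first_arg, second_arg, Phi_neg]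
    ring
  · have hden := sq_sub_one_ne_zero hg hg1
    have hD := sqrtDiscr_nonneg r g
    have first_den : g * sqrtDiscr r g - r ≠ 0 := by nlinarith
    have second_den : sqrtDiscr r g - r * g ≠ 0 := by nlinarith
    rw [tailGap_of_ne_one r hg1]
    congr 2
    · rw [div_eq_div_iff hden first_den]
      linear_combination g ^ 2 * sq_sqrtDiscr r g
    · rw [div_eq_div_iff hden second_den]
      linear_combination sq_sqrtDiscr r g

lemma continuousAt_tailGap_of_ne_one {r g : ℝ} (hg : 0 < g) (hg1 : g ≠ 1) :
    ContinuousAt (fun x : ℝ × ℝ => tailGap x.1 x.2) (r, g) := by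
  have hD := continuousAt_sqrtDiscr (x := (r, g)) hg.ne'
  have hden : (r, g).2 ^ 2 - 1 ≠ 0 := sq_sub_one_ne_zero hg hg1
  have hcont : ContinuousAt (fun x : ℝ × ℝ =>
      Phi ((x.1 + x.2 * sqrtDiscr x.1 x.2) / (x.2 ^ 2 - 1))
        - Phi ((x.1 * x.2 + sqrtDiscr x.1 x.2) / (x.2 ^ 2 - 1))) (r, g) := by
    fun_prop (disch := assumption)
  refine hcont.congr ?_
  filter_upwards [continuousAt_snd.eventually_ne hg1] with x hx
  exact (tailGap_of_ne_one x.1 hx).symm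

lemma continuousAt_tailGap_of_neg {r g : ℝ} (hr : r < 0) (hg : 0 < g) :
    ContinuousAt (fun x : ℝ × ℝ => tailGap x.1 x.2) (r, g) := by
  have hD := continuousAt_sqrtDiscr (x := (r, g)) hg.ne'
  have hD_nonneg := sqrtDiscr_nonneg r g
  have hlog : (r, g).2 ^ 2 ≠ 0 := pow_ne_zero 2 hg.ne'
  have first_den : (r, g).2 * sqrtDiscr (r, g).1 (r, g).2 - (r, g).1 ≠ 0 := by
    nlinarith
  have second_den : sqrtDiscr (r, g).1 (r, g).2 - (r, g).1 * (r, g).2 ≠ 0 := by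
    nlinarith
  have hcont : ContinuousAt (fun x : ℝ × ℝ =>
      Phi ((x.1 ^ 2 + x.2 ^ 2 * Real.log (x.2 ^ 2)) / (x.2 * sqrtDiscr x.1 x.2 - x.1))
        - Phi ((Real.log (x.2 ^ 2) - x.1 ^ 2) / (sqrtDiscr x.1 x.2 - x.1 * x.2))) (r, g) := by
    fun_prop (disch := assumption)
  refine hcont.congr ?_
  filter_upwards [continuousAt_fst.eventually_lt_const hr,
    continuousAt_snd.eventually_const_lt hg] with x hx1 hx2
  exact (tailGap_of_neg hx1 hx2).symm

lemma continuousAt_tailGap_one_of_nonneg {r : ℝ} (hr : 0 ≤ r) :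
    ContinuousAt (fun x : ℝ × ℝ => tailGap x.1 x.2) (r, 1) := by
  have hD := continuousAt_sqrtDiscr (x := (r, 1)) one_ne_zero
  have hden : (r, (1 : ℝ)).2 + 1 ≠ 0 := by norm_num
  have bound_tendsto : Tendsto (fun x : ℝ × ℝ => |sqrtDiscr x.1 x.2 - x.1| / (x.2 + 1))
      (𝓝 (r, 1)) (𝓝 0) := by
    have hcont : ContinuousAt (fun x : ℝ × ℝ => |sqrtDiscr x.1 x.2 - x.1| / (x.2 + 1)) (r, 1) := by
      fun_prop (disch := assumption)
    simpa [ContinuousAt, sqrtDiscr_one, abs_of_nonneg hr] using hcont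
  have tailGap_eq_zero : tailGap r 1 = 0 := by
    rw [tailGap_one, min_eq_right hr, zero_div, Phi_zero]
    norm_num
  rw [ContinuousAt, tailGap_eq_zero]
  refine squeeze_zero_norm' ?_ bound_tendsto
  filter_upwards [continuousAt_snd.eventually_const_lt one_pos] with x hx
  exact abs_tailGap_le x.1 hx

lemma continuousAt_tailGap (r : ℝ) {g : ℝ} (hg : 0 < g) :
    ContinuousAt (fun x : ℝ × ℝ => tailGap x.1 x.2) (r, g) := by
  rcases lt_or_ge r 0 with hr | hr
  · exact continuousAt_tailGap_of_neg hr hg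
  rcases eq_or_ne g 1 with rfl | hg1
  · exact continuousAt_tailGap_one_of_nonneg hr
  · exact continuousAt_tailGap_of_ne_one hg hg1

lemma continuousAt_calE (r : ℝ) {g : ℝ} (hg : 0 < g) :
    ContinuousAt (fun x : ℝ × ℝ => calE x.1 x.2) (r, g) := by
  have hgap := continuousAt_tailGap r hg
  have hgap_neg : ContinuousAt (fun x : ℝ × ℝ => tailGap (-x.1) x.2) (r, g) :=
    (continuousAt_tailGap (-r) hg).comp' (f := fun x : ℝ × ℝ => (-x.1, x.2)) (x := (r, g))
      (by fun_prop)
  simp only [calE_eq_tailGap]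
  fun_prop

end TailGap

lemma exists_ne_zero_forall_le_of_smul_invariant {E β : Type*} [NormedAddCommGroup E]
    [NormedSpace ℝ E] [ProperSpace E] [Nontrivial E] [LinearOrder β] [TopologicalSpace β]
    [ClosedIicTopology β] {f : E → β} (hf : ContinuousOn f {0}ᶜ)
    (hsmul : ∀ c : ℝ, 0 < c → ∀ x, f (c • x) = f x) : ∃ x₀ ≠ 0, ∀ x ≠ 0, f x₀ ≤ f x := by
  have sphere_subset : Metric.sphere (0 : E) 1 ⊆ {0}ᶜ := fun _ hx =>
    ne_zero_of_mem_sphere one_ne_zero ⟨_, hx⟩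
  obtain ⟨x₀, hx₀, hmin⟩ := (isCompact_sphere (0 : E) 1).exists_isMinOn
    (NormedSpace.sphere_nonempty.mpr zero_le_one) (hf.mono sphere_subset)
  refine ⟨x₀, sphere_subset hx₀, fun x hx => ?_⟩
  rw [← hsmul ‖x‖⁻¹ (inv_pos.mpr (norm_pos_iff.mpr hx)) x]
  exact hmin (mem_sphere_zero_iff_norm.mpr (norm_smul_inv_norm (𝕜 := ℝ) hx))

section QuadraticForm

variable {ι : Type*} [Fintype ι]

lemma sqrt_dotProduct_mulVec_smul (S : Matrix ι ι ℝ) {c : ℝ} (hc : 0 ≤ c) (α : ι → ℝ) :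
    √((c • α) ⬝ᵥ S *ᵥ (c • α)) = c * √(α ⬝ᵥ S *ᵥ α) := by
  rw [mulVec_smul, smul_dotProduct, dotProduct_smul, smul_smul, smul_eq_mul,
    Real.sqrt_mul (mul_self_nonneg c), Real.sqrt_mul_self hc]

lemma sqrt_dotProduct_mulVec_pos {S : Matrix ι ι ℝ} (hS : S.PosDef) {α : ι → ℝ} (hα : α ≠ 0) :
    0 < √(α ⬝ᵥ S *ᵥ α) :=
  Real.sqrt_pos.mpr (by simpa using hS.dotProduct_mulVec_pos hα)

end QuadraticForm

section ErrorFunction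

variable {p : ℕ} (μ0 μ1 : Fin p → ℝ) (S0 S1 : Matrix (Fin p) (Fin p) ℝ)

lemma Evec_smul {c : ℝ} (hc : 0 < c) (α : Fin p → ℝ) :
    Evec μ0 μ1 S0 S1 (c • α) = Evec μ0 μ1 S0 S1 α := by
  rw [Evec, sqrt_dotProduct_mulVec_smul S0 hc.le, sqrt_dotProduct_mulVec_smul S1 hc.le,
    smul_dotProduct, smul_dotProduct, ← smul_sub, smul_eq_mul, mul_div_mul_left _ _ hc.ne',
    mul_div_mul_left _ _ hc.ne', Evec]

variable {S0 S1}

lemma continuousOn_Evec (h0 : S0.PosDef) (h1 : S1.PosDef) :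
    ContinuousOn (Evec μ0 μ1 S0 S1) {0}ᶜ := by
  refine continuousOn_of_forall_continuousAt fun α hα => ?_
  have hσ0 := sqrt_dotProduct_mulVec_pos h0 hα
  have hσ1 := sqrt_dotProduct_mulVec_pos h1 hα
  have hσ1_ne := hσ1.ne'
  exact (continuousAt_calE _ (div_pos hσ0 hσ1)).comp' (f := fun α : Fin p → ℝ =>
    ((α ⬝ᵥ μ0 - α ⬝ᵥ μ1) / √(α ⬝ᵥ S1 *ᵥ α), √(α ⬝ᵥ S0 *ᵥ α) / √(α ⬝ᵥ S1 *ᵥ α)))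
    (by fun_prop (disch := assumption))

end ErrorFunction

/-- E attains its minimum over nonzero vectors. -/
theorem Evec_exists_min {p : ℕ} (hp : 1 ≤ p) (μ0 μ1 : Fin p → ℝ)
    (S0 S1 : Matrix (Fin p) (Fin p) ℝ) (h0 : S0.PosDef) (h1 : S1.PosDef) :
    ∃ α0 : Fin p → ℝ, α0 ≠ 0 ∧
      ∀ α : Fin p → ℝ, α ≠ 0 → Evec μ0 μ1 S0 S1 α0 ≤ Evec μ0 μ1 S0 S1 α := by
  have : Nonempty (Fin p) := ⟨⟨0, hp⟩⟩
  exact exists_ne_zero_forall_le_of_smul_invariant (continuousOn_Evec μ0 μ1 h0 h1)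
    fun c hc α => Evec_smul μ0 μ1 S0 S1 hc α
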